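/- Let X be a finite poset and x ∈ X. Let 𝒞 be the poset, ordered by inclusion, of finite nonempty chains (totally ordered subsets) of X that contain x; let L be the poset, ordered by inclusion, of all (possibly empty) chains of {z ∈ X : z < x}; and let U be the poset, ordered by inclusion, of all (possibly empty) chains of {z ∈ X : x < z}. Then the map sending a chain s to the pair (s ∩ {z : z < x}, s ∩ {z : x < z}) is an order isomorphism from 𝒞 onto the product poset L × U (with the componentwise order). -/

import Mathlib

/-- Let `X` be a finite poset and `x ∈ X`.  The map sending a chain `s`
containing `x` to the pair `(s ∩ {z < x}, s ∩ {z > x})` is an order isomorphism from the poset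
of (finite) nonempty chains of `X` containing `x` (ordered by inclusion) onto the product of
the poset of chains of `{z < x}` and the poset of chains of `{z > x}` (both possibly empty,
ordered by inclusion, product with the componentwise order). -/
theorem statement14 (X : Type) [PartialOrder X] [Finite X] (x : X) :
    ∃ e : {c : Set X // IsChain (· ≤ ·) c ∧ x ∈ c} ≃o
        ({c : Set X // IsChain (· ≤ ·) c ∧ c ⊆ {z : X | z < x}} ×
          {c : Set X // IsChain (· ≤ ·) c ∧ c ⊆ {z : X | x < z}}),
      ∀ c : {c : Set X // IsChain (· ≤ ·) c ∧ x ∈ c},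
        ((e c).1 : Set X) = (c : Set X) ∩ {z : X | z < x} ∧
        ((e c).2 : Set X) = (c : Set X) ∩ {z : X | x < z} := by
  have tri : ∀ c : Set X, IsChain (· ≤ ·) c → x ∈ c → ∀ z ∈ c, z < x ∨ z = x ∨ x < z := by
    intro c hc hx z hz
    rcases hc.total hz hx with h | h
    · rcases h.lt_or_eq with h | h
      · exact Or.inl h
      · exact Or.inr (Or.inl h)
    · rcases h.lt_or_eq with h | h
      · exact Or.inr (Or.inr h)
      · exact Or.inr (Or.inl h.symm)
  refine ⟨{
    toFun := fun c => (⟨c.1 ∩ {z : X | z < x}, c.2.1.mono Set.inter_subset_left,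
        Set.inter_subset_right⟩,
      ⟨c.1 ∩ {z : X | x < z}, c.2.1.mono Set.inter_subset_left, Set.inter_subset_right⟩)
    invFun := fun p => ⟨{z | z ∈ p.1.1 ∨ z = x ∨ z ∈ p.2.1}, ?_, Or.inr (Or.inl rfl)⟩
    left_inv := ?_
    right_inv := ?_
    map_rel_iff' := ?_ }, fun c => ⟨rfl, rfl⟩⟩
  · obtain ⟨⟨a, ha, ha'⟩, ⟨b, hb, hb'⟩⟩ := p
    rintro y hy z hz -
    have la : ∀ w ∈ a, w < x := fun w hw => ha' hw
    have lb : ∀ w ∈ b, x < w := fun w hw => hb' hw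
    rcases hy with hy | rfl | hy <;> rcases hz with hz | rfl | hz
    · exact ha.total hy hz
    · exact Or.inl (la _ hy).le
    · exact Or.inl ((la _ hy).trans (lb _ hz)).le
    · exact Or.inr (la _ hz).le
    · exact Or.inl le_rfl
    · exact Or.inl (lb _ hz).le
    · exact Or.inr ((la _ hz).trans (lb _ hy)).le
    · exact Or.inr (lb _ hy).le
    · exact hb.total hy hz
  · rintro ⟨c, hc, hx⟩
    apply Subtype.ext
    ext z
    constructor
    · rintro (h | h | h)
      · exact h.1
      · exact h ▸ hx
      · exact h.1
    · intro hz
      rcases tri c hc hx z hz with h | h | h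
      · exact Or.inl ⟨hz, h⟩
      · exact Or.inr (Or.inl h)
      · exact Or.inr (Or.inr ⟨hz, h⟩)
  · rintro ⟨⟨a, ha, ha'⟩, ⟨b, hb, hb'⟩⟩
    have la : ∀ w ∈ a, w < x := fun w hw => ha' hw
    have lb : ∀ w ∈ b, x < w := fun w hw => hb' hw
    refine Prod.ext (Subtype.ext ?_) (Subtype.ext ?_)
    · ext z
      constructor
      · rintro ⟨h | h | h, hz : z < x⟩
        · exact h
        · exact absurd h hz.ne
        · exact absurd hz (lb z h).asymm
      · exact fun h => ⟨Or.inl h, la z h⟩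
    · ext z
      constructor
      · rintro ⟨h | h | h, hz : x < z⟩
        · exact absurd hz (la z h).asymm
        · exact absurd h hz.ne'
        · exact h
      · exact fun h => ⟨Or.inr (Or.inr h), lb z h⟩
  · rintro ⟨c, hc, hx⟩ ⟨d, hd, hxd⟩
    constructor
    · rintro ⟨h1, h2⟩ z hz
      rcases tri c hc hx z hz with h | h | h
      · exact (h1 ⟨hz, h⟩).1
      · exact h ▸ hxd
      · exact (h2 ⟨hz, h⟩).1
    · intro h
      exact ⟨fun z hz => ⟨h hz.1, hz.2⟩, fun z hz => ⟨h hz.1, hz.2⟩⟩
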